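/- Let E ∈ GL(m,k) and F ∈ GL(n,k), and assume B(E,F) ≠ 0. Let β : B(E,F) → B(E,F) ⊗ B(F) be the unique algebra homomorphism with β(z_{ij}) = Σ_{k=1}^n z_{ik} ⊗ b_{kj}. Then the linear map κ_r : B(E,F) ⊗ B(E,F) → B(E,F) ⊗ B(F) defined by κ_r = (m_Z ⊗ id_{B(F)}) ∘ (id_{B(E,F)} ⊗ β), where m_Z is the multiplication of B(E,F), is bijective. -/

import Mathlib

open scoped TensorProduct
open Matrix

noncomputable section

variable (k : Type) [Field k]

/-- The matrix of free generators of the free algebra on `Fin m × Fin n`. -/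
def gens (m n : ℕ) : Matrix (Fin m) (Fin n) (FreeAlgebra k (Fin m × Fin n)) :=
  Matrix.of fun i j => FreeAlgebra.ι k (i, j)

/-- A scalar matrix viewed as a matrix over a `k`-algebra. -/
def liftMat {A : Type} [Semiring A] [Algebra k A] {p q : ℕ}
    (M : Matrix (Fin p) (Fin q) k) : Matrix (Fin p) (Fin q) A :=
  M.map (algebraMap k A)

/-- The defining relations of the algebra `B(E,F)`:
`F⁻¹ * ᵀz * E * z = 1` and `z * F⁻¹ * ᵀz * E = 1`. -/
inductive BRel {m n : ℕ} (E : Matrix (Fin m) (Fin m) k) (F : Matrix (Fin n) (Fin n) k) :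
    FreeAlgebra k (Fin m × Fin n) → FreeAlgebra k (Fin m × Fin n) → Prop
  | left (i j : Fin n) : BRel E F
      ((liftMat k (A := FreeAlgebra k (Fin m × Fin n)) F⁻¹ * (gens k m n)ᵀ *
          liftMat k (A := FreeAlgebra k (Fin m × Fin n)) E * gens k m n :
          Matrix (Fin n) (Fin n) (FreeAlgebra k (Fin m × Fin n))) i j)
      ((1 : Matrix (Fin n) (Fin n) (FreeAlgebra k (Fin m × Fin n))) i j)
  | right (i j : Fin m) : BRel E F
      ((gens k m n * liftMat k (A := FreeAlgebra k (Fin m × Fin n)) F⁻¹ * (gens k m n)ᵀ *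
          liftMat k (A := FreeAlgebra k (Fin m × Fin n)) E :
          Matrix (Fin m) (Fin m) (FreeAlgebra k (Fin m × Fin n))) i j)
      ((1 : Matrix (Fin m) (Fin m) (FreeAlgebra k (Fin m × Fin n))) i j)

/-- The algebra `B(E,F)`.  The Hopf algebra `B(E)` is `BB k E E`. -/
abbrev BB {m n : ℕ} (E : Matrix (Fin m) (Fin m) k) (F : Matrix (Fin n) (Fin n) k) :=
  RingQuot (BRel k E F)

/-- The matrix of generators of `B(E,F)`. -/
def ZMat {m n : ℕ} (E : Matrix (Fin m) (Fin m) k) (F : Matrix (Fin n) (Fin n) k) :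
    Matrix (Fin m) (Fin n) (BB k E F) :=
  Matrix.of fun i j => RingQuot.mkAlgHom k (BRel k E F) (gens k m n i j)

/-!
The inverse of the Galois map is `x ⊗ b ↦ (x ⊗ 1) · γ(b)`, where the translation map
`γ : B(F) → B(E,F)ᵒᵖ ⊗ B(E,F)` is the composite of the comultiplication
`B(F) → B(F,E) ⊗ B(E,F)` with the antipode `B(F,E) → B(E,F)ᵒᵖ`, `z ↦ F⁻¹ ᵀz E`.
Since `β` and `γ` are multiplicative, the elements `y` with `(y₀ ⊗ 1) · γ(y₁) = 1 ⊗ y`, where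
`β(y) = y₀ ⊗ y₁`, form a subalgebra, and so do the `b` with `1 ⊗ b` in the range of the Galois map.
Hence only generators need checking, where both conditions say that `F⁻¹ ᵀz E` is inverse to `z`.
-/

section GaloisMap

variable {R A H : Type*} [CommSemiring R] [Semiring A] [Algebra R A] [Semiring H] [Algebra R H]

/-- The right Galois map `x ⊗ y ↦ (x ⊗ 1) β(y)` of an algebra homomorphism `β : A → A ⊗ H`,
typically the coaction of a Hopf algebra `H`. -/
def galoisMap (β : A →ₐ[R] A ⊗[R] H) : A ⊗[R] A →ₗ[R] A ⊗[R] H :=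
  LinearMap.rTensor H (LinearMap.mul' R A) ∘ₗ
    (TensorProduct.assoc R A A H).symm.toLinearMap ∘ₗ LinearMap.lTensor A β.toLinearMap

lemma galoisMap_tmul (β : A →ₐ[R] A ⊗[R] H) (x y : A) :
    galoisMap β (x ⊗ₜ y) = (x ⊗ₜ 1) * β y := by
  simp only [galoisMap, LinearMap.comp_apply, LinearMap.lTensor_tmul, AlgHom.toLinearMap_apply,
    LinearEquiv.coe_coe]
  induction β y with
  | zero => simp
  | add a b ha hb => rw [TensorProduct.tmul_add, map_add, map_add, ha, hb, mul_add]
  | tmul a b => simp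

lemma tmul_one_mul_mem_range_galoisMap (β : A →ₐ[R] A ⊗[R] H) (x : A) {w : A ⊗[R] H}
    (hw : w ∈ LinearMap.range (galoisMap β)) :
    (x ⊗ₜ 1) * w ∈ LinearMap.range (galoisMap β) := by
  obtain ⟨u, rfl⟩ := hw
  induction u with
  | zero => simp
  | add a b ha hb => rw [map_add, mul_add]; exact add_mem ha hb
  | tmul a b => exact ⟨(x * a) ⊗ₜ b, by simp [galoisMap_tmul, ← mul_assoc]⟩

lemma mul_coaction_mem_range_galoisMap (β : A →ₐ[R] A ⊗[R] H) {w : A ⊗[R] H}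
    (hw : w ∈ LinearMap.range (galoisMap β)) (y : A) :
    w * β y ∈ LinearMap.range (galoisMap β) := by
  obtain ⟨u, rfl⟩ := hw
  induction u with
  | zero => simp
  | add a b ha hb => rw [map_add, add_mul]; exact add_mem ha hb
  | tmul a b => exact ⟨a ⊗ₜ (b * y), by simp [galoisMap_tmul, mul_assoc]⟩

lemma one_tmul_mul_mem_range_galoisMap (β : A →ₐ[R] A ⊗[R] H) {g h : H}
    (hg : 1 ⊗ₜ g ∈ LinearMap.range (galoisMap β)) (hh : 1 ⊗ₜ h ∈ LinearMap.range (galoisMap β)) :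
    1 ⊗ₜ (g * h) ∈ LinearMap.range (galoisMap β) := by
  suffices ∀ u, (1 ⊗ₜ g) * galoisMap β u ∈ LinearMap.range (galoisMap β) by
    obtain ⟨u, hu⟩ := hh
    simpa [hu] using this u
  intro u
  induction u with
  | zero => simp
  | add a b ha hb => rw [map_add, mul_add]; exact add_mem ha hb
  | tmul x y =>
    have hcomm : (1 ⊗ₜ g) * galoisMap β (x ⊗ₜ y) = (x ⊗ₜ 1) * ((1 ⊗ₜ g) * β y) := by
      simp [galoisMap_tmul, ← mul_assoc]
    rw [hcomm]
    exact tmul_one_mul_mem_range_galoisMap β x (mul_coaction_mem_range_galoisMap β hg y)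

theorem galoisMap_surjective_of_adjoin_eq_top (β : A →ₐ[R] A ⊗[R] H) {s : Set H}
    (hs : Algebra.adjoin R s = ⊤)
    (hβ : ∀ h ∈ s, 1 ⊗ₜ h ∈ LinearMap.range (galoisMap β)) :
    Function.Surjective (galoisMap β) := by
  have one_tmul_mem (h : H) : 1 ⊗ₜ h ∈ LinearMap.range (galoisMap β) := by
    have hh : h ∈ Algebra.adjoin R s := hs ▸ Algebra.mem_top
    induction hh using Algebra.adjoin_induction with
    | mem h hh => exact hβ h hh
    | algebraMap r =>
      exact ⟨1 ⊗ₜ algebraMap R A r, by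
        simp [galoisMap_tmul, Algebra.algebraMap_eq_smul_one]⟩
    | add a b _ _ ha hb => rw [TensorProduct.tmul_add]; exact add_mem ha hb
    | mul a b _ _ ha hb => exact one_tmul_mul_mem_range_galoisMap β ha hb
  rw [← LinearMap.range_eq_top, eq_top_iff]
  rintro w -
  induction w with
  | zero => exact zero_mem _
  | add a b ha hb => exact add_mem ha hb
  | tmul x h => simpa using tmul_one_mul_mem_range_galoisMap β x (one_tmul_mem h)

/-- The inner action of the enveloping algebra of `A` on `A ⊗ A`, in which `u ⊗ v` sends `s ⊗ t` to
`s u ⊗ v t`. -/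
def innerAction (R A : Type*) [CommSemiring R] [Semiring A] [Algebra R A] :
    Aᵐᵒᵖ ⊗[R] A →ₐ[R] Module.End R (A ⊗[R] A) :=
  Module.endTensorEndAlgHom.comp
    (Algebra.TensorProduct.map (Algebra.lsmul R R A) (Algebra.lsmul R R A))

@[simp]
lemma innerAction_tmul_tmul (u : Aᵐᵒᵖ) (v s t : A) :
    innerAction R A (u ⊗ₜ v) (s ⊗ₜ t) = (s * u.unop) ⊗ₜ (v * t) :=
  rfl

lemma commute_lmul_tmul_one_innerAction (x : A) (w : Aᵐᵒᵖ ⊗[R] A) :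
    Commute (Algebra.lmul R (A ⊗[R] A) (x ⊗ₜ 1)) (innerAction R A w) := by
  induction w with
  | zero => simp
  | add a b ha hb => rw [map_add]; exact ha.add_right hb
  | tmul u v => exact TensorProduct.ext' fun s t => by simp [mul_assoc]

/-- The action of `A ⊗ H` on `A ⊗ A` in which `A` multiplies the left factor from the left and `H`
acts through the inner action along a translation map `γ : H → Aᵒᵖ ⊗ A`. Evaluated at `1 ⊗ 1` it is
the candidate inverse of the Galois map. -/
def translationAction (γ : H →ₐ[R] Aᵐᵒᵖ ⊗[R] A) : A ⊗[R] H →ₐ[R] Module.End R (A ⊗[R] A) :=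
  Algebra.TensorProduct.lift
    ((Algebra.lmul R (A ⊗[R] A)).comp Algebra.TensorProduct.includeLeft)
    ((innerAction R A).comp γ)
    fun x h => commute_lmul_tmul_one_innerAction x (γ h)

lemma translationAction_tmul (γ : H →ₐ[R] Aᵐᵒᵖ ⊗[R] A) (x : A) (h : H) (w : A ⊗[R] A) :
    translationAction γ (x ⊗ₜ h) w = (x ⊗ₜ 1) * innerAction R A (γ h) w :=
  rfl

theorem galoisMap_injective_of_translation (β : A →ₐ[R] A ⊗[R] H) (γ : H →ₐ[R] Aᵐᵒᵖ ⊗[R] A)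
    {s : Set A} (hs : Algebra.adjoin R s = ⊤)
    (hγ : ∀ y ∈ s, ∀ t, translationAction γ (β y) (1 ⊗ₜ t) = 1 ⊗ₜ (y * t)) :
    Function.Injective (galoisMap β) := by
  have translationAction_coaction (y t : A) :
      translationAction γ (β y) (1 ⊗ₜ t) = 1 ⊗ₜ (y * t) := by
    have hy : y ∈ Algebra.adjoin R s := hs ▸ Algebra.mem_top
    induction hy using Algebra.adjoin_induction generalizing t with
    | mem y hy => exact hγ y hy t
    | algebraMap r =>
      rw [AlgHom.commutes, AlgHom.commutes, Module.algebraMap_end_apply, ← Algebra.smul_def,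
        TensorProduct.tmul_smul]
    | add a b _ _ ha hb =>
      rw [map_add, map_add, LinearMap.add_apply, ha, hb, add_mul, TensorProduct.tmul_add]
    | mul a b _ _ ha hb => rw [map_mul, map_mul, Module.End.mul_apply, hb, ha, mul_assoc]
  refine Function.LeftInverse.injective (g := fun w => translationAction γ w (1 ⊗ₜ 1)) fun w => ?_
  induction w with
  | zero => simp
  | add a b ha hb => simpa only [map_add, LinearMap.add_apply] using congrArg₂ (· + ·) ha hb
  | tmul x y =>
    beta_reduce
    rw [galoisMap_tmul, map_mul, Module.End.mul_apply, translationAction_coaction,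
      translationAction_tmul]
    simp

end GaloisMap

section Matrices

lemma transpose_mul_of_commute {l m n A : Type*} [Fintype m] [NonUnitalNonAssocSemiring A]
    {M : Matrix l m A} {N : Matrix m n A} (h : ∀ i j i' j', Commute (M i j) (N i' j')) :
    (M * N)ᵀ = Nᵀ * Mᵀ := by
  ext i j
  simp only [transpose_apply, mul_apply]
  exact Finset.sum_congr rfl fun a _ => h j a a i

lemma map_op_mul_map_op {l m n A : Type*} [Fintype m] [NonUnitalNonAssocSemiring A]
    (M : Matrix l m A) (N : Matrix m n A) :
    M.map MulOpposite.op * N.map MulOpposite.op = (Nᵀ * Mᵀ)ᵀ.map MulOpposite.op := by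
  ext i j
  simp [mul_apply]

variable {k} {A B : Type} [Semiring A] [Algebra k A] [Semiring B] [Algebra k B] {p q r : ℕ}

lemma liftMat_mul (M : Matrix (Fin p) (Fin q) k) (N : Matrix (Fin q) (Fin r) k) :
    liftMat k (A := A) (M * N) = liftMat k (A := A) M * liftMat k (A := A) N :=
  Matrix.map_mul

lemma liftMat_one : liftMat k (A := A) (1 : Matrix (Fin p) (Fin p) k) = 1 :=
  Matrix.map_one _ (map_zero _) (map_one _)

lemma liftMat_mul_nonsing_inv {M : Matrix (Fin p) (Fin p) k} (hM : IsUnit M.det) :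
    liftMat k (A := A) M * liftMat k (A := A) M⁻¹ = 1 := by
  rw [← liftMat_mul, mul_nonsing_inv M hM, liftMat_one]

lemma liftMat_nonsing_inv_mul {M : Matrix (Fin p) (Fin p) k} (hM : IsUnit M.det) :
    liftMat k (A := A) M⁻¹ * liftMat k (A := A) M = 1 := by
  rw [← liftMat_mul, nonsing_inv_mul M hM, liftMat_one]

lemma map_liftMat (f : A →ₐ[k] B) (M : Matrix (Fin p) (Fin q) k) :
    (liftMat k (A := A) M).map f = liftMat k M := by
  ext
  simp [liftMat]

lemma map_op_liftMat (M : Matrix (Fin p) (Fin q) k) :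
    (liftMat k (A := A) M).map MulOpposite.op = liftMat k M :=
  rfl

lemma transpose_liftMat_mul (M : Matrix (Fin p) (Fin q) k) (x : Matrix (Fin q) (Fin r) A) :
    (liftMat k (A := A) M * x)ᵀ = xᵀ * (liftMat k (A := A) M)ᵀ :=
  transpose_mul_of_commute fun i j _ _ => Algebra.commutes (M i j) _

lemma transpose_mul_liftMat (x : Matrix (Fin p) (Fin q) A) (M : Matrix (Fin q) (Fin r) k) :
    (x * liftMat k (A := A) M)ᵀ = (liftMat k (A := A) M)ᵀ * xᵀ :=
  transpose_mul_of_commute fun _ _ i j => (Algebra.commutes (M i j) _).symm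

end Matrices

section Relations

variable {k} {A B : Type} [Semiring A] [Algebra k A] [Semiring B] [Algebra k B] {l m n : ℕ}
  {D : Matrix (Fin l) (Fin l) k} {E : Matrix (Fin m) (Fin m) k} {F : Matrix (Fin n) (Fin n) k}

/-- The matrix `F⁻¹ ᵀx E`, which the relations of `B(E,F)` make inverse to `x`. -/
def twistedTranspose (E : Matrix (Fin m) (Fin m) k) (F : Matrix (Fin n) (Fin n) k)
    (x : Matrix (Fin m) (Fin n) A) : Matrix (Fin n) (Fin m) A :=
  liftMat k (A := A) F⁻¹ * xᵀ * liftMat k (A := A) E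

lemma twistedTranspose_map (f : A →ₐ[k] B) (x : Matrix (Fin m) (Fin n) A) :
    (twistedTranspose E F x).map f = twistedTranspose E F (x.map f) := by
  simp only [twistedTranspose, Matrix.map_mul, map_liftMat, transpose_map]

lemma transpose_twistedTranspose (x : Matrix (Fin m) (Fin n) A) :
    (twistedTranspose E F x)ᵀ =
      (liftMat k (A := A) E)ᵀ * x * (liftMat k (A := A) F⁻¹)ᵀ := by
  rw [twistedTranspose, transpose_mul_liftMat, transpose_liftMat_mul, transpose_transpose,
    Matrix.mul_assoc]

/-- The matrix `x` over a `k`-algebra satisfies the defining relations of `B(E,F)`: these matrices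
are the `A`-valued points of `B(E,F)`. -/
structure IsBBMatrix (E : Matrix (Fin m) (Fin m) k) (F : Matrix (Fin n) (Fin n) k)
    (x : Matrix (Fin m) (Fin n) A) : Prop where
  twistedTranspose_mul : twistedTranspose E F x * x = 1
  mul_twistedTranspose : x * twistedTranspose E F x = 1

namespace IsBBMatrix

variable {x : Matrix (Fin m) (Fin n) A}

lemma map (hx : IsBBMatrix E F x) (f : A →ₐ[k] B) : IsBBMatrix E F (x.map f) where
  twistedTranspose_mul := by
    rw [← twistedTranspose_map, ← Matrix.map_mul, hx.twistedTranspose_mul,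
      Matrix.map_one _ (map_zero f) (map_one f)]
  mul_twistedTranspose := by
    rw [← twistedTranspose_map, ← Matrix.map_mul, hx.mul_twistedTranspose,
      Matrix.map_one _ (map_zero f) (map_one f)]

lemma transpose_mul_mul (hx : IsBBMatrix E F x) (hF : IsUnit F.det) :
    xᵀ * liftMat k (A := A) E * x = liftMat k (A := A) F :=
  calc xᵀ * liftMat k (A := A) E * x
      = liftMat k (A := A) F * liftMat k (A := A) F⁻¹ * (xᵀ * liftMat k (A := A) E * x) := by
        rw [liftMat_mul_nonsing_inv hF, Matrix.one_mul]
    _ = liftMat k (A := A) F * (twistedTranspose E F x * x) := by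
        simp only [twistedTranspose, Matrix.mul_assoc]
    _ = liftMat k (A := A) F := by rw [hx.twistedTranspose_mul, Matrix.mul_one]

lemma mul_inv_mul_transpose (hx : IsBBMatrix E F x) (hE : IsUnit E.det) :
    x * liftMat k (A := A) F⁻¹ * xᵀ = liftMat k (A := A) E⁻¹ :=
  calc x * liftMat k (A := A) F⁻¹ * xᵀ
      = x * liftMat k (A := A) F⁻¹ * xᵀ * (liftMat k (A := A) E * liftMat k (A := A) E⁻¹) := by
        rw [liftMat_mul_nonsing_inv hE, Matrix.mul_one]
    _ = x * twistedTranspose E F x * liftMat k (A := A) E⁻¹ := by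
        simp only [twistedTranspose, Matrix.mul_assoc]
    _ = liftMat k (A := A) E⁻¹ := by rw [hx.mul_twistedTranspose, Matrix.one_mul]

lemma of_congruence (hE : IsUnit E.det) (hF : IsUnit F.det)
    (hEF : xᵀ * liftMat k (A := A) E * x = liftMat k (A := A) F)
    (hFE : x * liftMat k (A := A) F⁻¹ * xᵀ = liftMat k (A := A) E⁻¹) : IsBBMatrix E F x where
  twistedTranspose_mul := by
    rw [twistedTranspose, Matrix.mul_assoc, Matrix.mul_assoc, ← Matrix.mul_assoc xᵀ, hEF,
      liftMat_nonsing_inv_mul hF]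
  mul_twistedTranspose := by
    rw [twistedTranspose, ← Matrix.mul_assoc, ← Matrix.mul_assoc, hFE, liftMat_nonsing_inv_mul hE]

lemma mul_of_commute {y : Matrix (Fin l) (Fin m) A} (hy : IsBBMatrix D E y)
    (hx : IsBBMatrix E F x) (hE : IsUnit E.det) (h : ∀ i j i' j', Commute (y i j) (x i' j')) :
    IsBBMatrix D F (y * x) where
  twistedTranspose_mul :=
    calc twistedTranspose D F (y * x) * (y * x)
        = liftMat k (A := A) F⁻¹ * xᵀ * (yᵀ * liftMat k (A := A) D * y) * x := by
          simp only [twistedTranspose, transpose_mul_of_commute h, Matrix.mul_assoc]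
      _ = 1 := by rw [hy.transpose_mul_mul hE]; exact hx.twistedTranspose_mul
  mul_twistedTranspose :=
    calc y * x * twistedTranspose D F (y * x)
        = y * (x * liftMat k (A := A) F⁻¹ * xᵀ) * yᵀ * liftMat k (A := A) D := by
          simp only [twistedTranspose, transpose_mul_of_commute h, Matrix.mul_assoc]
      _ = y * twistedTranspose D E y := by
          rw [hx.mul_inv_mul_transpose hE]
          simp only [twistedTranspose, Matrix.mul_assoc]
      _ = 1 := hy.mul_twistedTranspose

lemma map_op_twistedTranspose (hx : IsBBMatrix E F x) (hE : IsUnit E.det) (hF : IsUnit F.det) :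
    IsBBMatrix F E ((twistedTranspose E F x).map MulOpposite.op) := by
  set w := twistedTranspose E F x
  have hwT : wᵀ = (liftMat k (A := A) E)ᵀ * x * (liftMat k (A := A) F⁻¹)ᵀ :=
    transpose_twistedTranspose x
  have hFE : wᵀ * ((liftMat k (A := A) F)ᵀ * w) = (liftMat k (A := A) E)ᵀ :=
    calc wᵀ * ((liftMat k (A := A) F)ᵀ * w)
        = (liftMat k (A := A) E)ᵀ * x * (liftMat k (A := A) F * liftMat k (A := A) F⁻¹)ᵀ * w := by
          rw [hwT, transpose_mul_liftMat]
          simp only [Matrix.mul_assoc]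
      _ = (liftMat k (A := A) E)ᵀ := by
          rw [liftMat_mul_nonsing_inv hF, transpose_one, Matrix.mul_one, Matrix.mul_assoc,
            hx.mul_twistedTranspose, Matrix.mul_one]
  have hEF : w * ((liftMat k (A := A) E⁻¹)ᵀ * wᵀ) = (liftMat k (A := A) F⁻¹)ᵀ :=
    calc w * ((liftMat k (A := A) E⁻¹)ᵀ * wᵀ)
        = w * (liftMat k (A := A) E * liftMat k (A := A) E⁻¹)ᵀ * x * (liftMat k (A := A) F⁻¹)ᵀ := by
          rw [hwT, transpose_mul_liftMat]
          simp only [Matrix.mul_assoc]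
      _ = (liftMat k (A := A) F⁻¹)ᵀ := by
          rw [liftMat_mul_nonsing_inv hE, transpose_one, Matrix.mul_one,
            hx.twistedTranspose_mul, Matrix.one_mul]
  refine of_congruence hF hE ?_ ?_
  · rw [← map_op_liftMat, ← map_op_liftMat, ← transpose_map, map_op_mul_map_op, map_op_mul_map_op,
      transpose_transpose, transpose_transpose, hFE, transpose_transpose]
  · rw [← map_op_liftMat, ← map_op_liftMat, ← transpose_map, map_op_mul_map_op, map_op_mul_map_op,
      transpose_transpose, transpose_transpose, hEF, transpose_transpose]

end IsBBMatrix

end Relations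

namespace BB

variable {k} {l m n : ℕ}
  {D : Matrix (Fin l) (Fin l) k} {E : Matrix (Fin m) (Fin m) k} {F : Matrix (Fin n) (Fin n) k}

lemma isBBMatrix_ZMat (E : Matrix (Fin m) (Fin m) k) (F : Matrix (Fin n) (Fin n) k) :
    IsBBMatrix E F (ZMat k E F) := by
  set π := RingQuot.mkAlgHom k (BRel k E F)
  have hz : ZMat k E F = (gens k m n).map π := rfl
  have map_one_π {p : ℕ} : (1 : Matrix (Fin p) (Fin p) _).map π = 1 :=
    Matrix.map_one _ (map_zero π) (map_one π)
  constructor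
  · rw [hz, ← twistedTranspose_map, ← Matrix.map_mul, ← map_one_π]
    ext i j
    exact RingQuot.mkAlgHom_rel k (BRel.left i j)
  · rw [hz, ← twistedTranspose_map, ← Matrix.map_mul, ← map_one_π, twistedTranspose,
      ← Matrix.mul_assoc, ← Matrix.mul_assoc]
    ext i j
    exact RingQuot.mkAlgHom_rel k (BRel.right i j)

lemma adjoin_range_ZMat (E : Matrix (Fin m) (Fin m) k) (F : Matrix (Fin n) (Fin n) k) :
    Algebra.adjoin k (Set.range fun p : Fin m × Fin n => ZMat k E F p.1 p.2) = ⊤ := by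
  set π := RingQuot.mkAlgHom k (BRel k E F)
  have hrange : Set.range (fun p : Fin m × Fin n => ZMat k E F p.1 p.2) =
      π '' Set.range (FreeAlgebra.ι k) := by
    rw [← Set.range_comp]
    rfl
  rw [hrange, ← AlgHom.map_adjoin, FreeAlgebra.adjoin_range_ι, Algebra.map_top,
    AlgHom.range_eq_top]
  exact RingQuot.mkAlgHom_surjective k _

section Lift

variable {A : Type} [Semiring A] [Algebra k A] {x : Matrix (Fin m) (Fin n) A}

lemma freeLift_eq_of_BRel (hx : IsBBMatrix E F x) ⦃u v : FreeAlgebra k (Fin m × Fin n)⦄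
    (h : BRel k E F u v) :
    FreeAlgebra.lift k (fun p => x p.1 p.2) u = FreeAlgebra.lift k (fun p => x p.1 p.2) v := by
  set φ := FreeAlgebra.lift k (fun p : Fin m × Fin n => x p.1 p.2)
  have hφ : (gens k m n).map φ = x := by ext; simp [gens, φ]
  have map_one_φ {p : ℕ} : (1 : Matrix (Fin p) (Fin p) _).map φ = 1 :=
    Matrix.map_one _ (map_zero φ) (map_one φ)
  cases h with
  | left i j =>
    have hmap : (twistedTranspose E F (gens k m n) * gens k m n).map φ =
        (1 : Matrix (Fin n) (Fin n) _).map φ := by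
      rw [Matrix.map_mul, twistedTranspose_map, hφ, hx.twistedTranspose_mul, map_one_φ]
    exact congrFun₂ hmap i j
  | right i j =>
    have hmap : (gens k m n * twistedTranspose E F (gens k m n)).map φ =
        (1 : Matrix (Fin m) (Fin m) _).map φ := by
      rw [Matrix.map_mul, twistedTranspose_map, hφ, hx.mul_twistedTranspose, map_one_φ]
    rw [twistedTranspose, ← Matrix.mul_assoc, ← Matrix.mul_assoc] at hmap
    exact congrFun₂ hmap i j

/-- The universal property of `B(E,F)`: the algebra homomorphism sending the generators to the
entries of a given matrix satisfying the relations. -/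
def lift (hx : IsBBMatrix E F x) : BB k E F →ₐ[k] A :=
  RingQuot.liftAlgHom k ⟨FreeAlgebra.lift k fun p => x p.1 p.2, freeLift_eq_of_BRel hx⟩

@[simp]
lemma lift_ZMat (hx : IsBBMatrix E F x) (i : Fin m) (j : Fin n) :
    lift hx (ZMat k E F i j) = x i j := by
  simp [lift, ZMat, gens]

end Lift

lemma isBBMatrix_comul (D : Matrix (Fin l) (Fin l) k) (F : Matrix (Fin n) (Fin n) k)
    (hE : IsUnit E.det) :
    IsBBMatrix D F
      ((ZMat k D E).map (Algebra.TensorProduct.includeLeft (R := k) (S := k) (B := BB k E F)) *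
        (ZMat k E F).map (Algebra.TensorProduct.includeRight (R := k) (A := BB k D E))) :=
  ((isBBMatrix_ZMat D E).map _).mul_of_commute ((isBBMatrix_ZMat E F).map _) hE fun i j i' j' => by
    simp [Commute, SemiconjBy]

/-- The comultiplication `B(D,F) → B(D,E) ⊗ B(E,F)`, `z i j ↦ ∑ p, z i p ⊗ z p j`; for `D = E = F`
it is that of the Hopf algebra `B(F)`. -/
def comul (D : Matrix (Fin l) (Fin l) k) (F : Matrix (Fin n) (Fin n) k) (hE : IsUnit E.det) :
    BB k D F →ₐ[k] BB k D E ⊗[k] BB k E F :=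
  lift (isBBMatrix_comul D F hE)

lemma comul_ZMat (hE : IsUnit E.det) (i : Fin l) (j : Fin n) :
    comul D F hE (ZMat k D F i j) = ∑ p, ZMat k D E i p ⊗ₜ ZMat k E F p j := by
  simp [comul, mul_apply]

/-- The antipode `B(F,E) → B(E,F)ᵒᵖ`, sending the matrix of generators to `F⁻¹ ᵀz E`. -/
def antipode (hE : IsUnit E.det) (hF : IsUnit F.det) : BB k F E →ₐ[k] (BB k E F)ᵐᵒᵖ :=
  lift ((isBBMatrix_ZMat E F).map_op_twistedTranspose hE hF)

lemma antipode_ZMat (hE : IsUnit E.det) (hF : IsUnit F.det) (i : Fin n) (p : Fin m) :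
    antipode hE hF (ZMat k F E i p) =
      MulOpposite.op (twistedTranspose E F (ZMat k E F) i p) := by
  simp [antipode]

/-- The translation map `B(F) → B(E,F)ᵒᵖ ⊗ B(E,F)`, `b ↦ κ_r⁻¹(1 ⊗ b)`. -/
def translation (hE : IsUnit E.det) (hF : IsUnit F.det) :
    BB k F F →ₐ[k] (BB k E F)ᵐᵒᵖ ⊗[k] BB k E F :=
  (Algebra.TensorProduct.map (antipode hE hF) (AlgHom.id k _)).comp (comul F F hE)

lemma translation_ZMat (hE : IsUnit E.det) (hF : IsUnit F.det) (i j : Fin n) :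
    translation hE hF (ZMat k F F i j) =
      ∑ p, MulOpposite.op (twistedTranspose E F (ZMat k E F) i p) ⊗ₜ ZMat k E F p j := by
  simp [translation, comul_ZMat, antipode_ZMat]

variable {β : BB k E F →ₐ[k] BB k E F ⊗[k] BB k F F}

lemma one_tmul_ZMat_mem_range_galoisMap
    (hβ : ∀ i j, β (ZMat k E F i j) = ∑ p, ZMat k E F i p ⊗ₜ ZMat k F F p j) (i j : Fin n) :
    1 ⊗ₜ ZMat k F F i j ∈ LinearMap.range (galoisMap β) := by
  set z := ZMat k E F
  set w := twistedTranspose E F z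
  refine ⟨∑ p, w i p ⊗ₜ z p j, ?_⟩
  calc galoisMap β (∑ p, w i p ⊗ₜ z p j)
      = ∑ p, ∑ a, (w i p * z p a) ⊗ₜ ZMat k F F a j := by
        simp [galoisMap_tmul, hβ, Finset.mul_sum]
    _ = ∑ a, (w * z) i a ⊗ₜ ZMat k F F a j := by
        rw [Finset.sum_comm]
        simp only [mul_apply, TensorProduct.sum_tmul]
    _ = 1 ⊗ₜ ZMat k F F i j := by
        simp [w, z, (isBBMatrix_ZMat E F).twistedTranspose_mul, one_apply, TensorProduct.ite_tmul]

lemma translationAction_coaction_ZMat (hE : IsUnit E.det) (hF : IsUnit F.det)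
    (hβ : ∀ i j, β (ZMat k E F i j) = ∑ p, ZMat k E F i p ⊗ₜ ZMat k F F p j)
    (i : Fin m) (j : Fin n) (t : BB k E F) :
    translationAction (translation hE hF) (β (ZMat k E F i j)) (1 ⊗ₜ t) =
      1 ⊗ₜ (ZMat k E F i j * t) := by
  set z := ZMat k E F
  set w := twistedTranspose E F z
  calc translationAction (translation hE hF) (β (z i j)) (1 ⊗ₜ t)
      = ∑ a, ∑ p, (z i a * w a p) ⊗ₜ (z p j * t) := by
        simp [hβ, translationAction_tmul, translation_ZMat, Finset.mul_sum, w, z]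
    _ = ∑ p, (z * w) i p ⊗ₜ (z p j * t) := by
        rw [Finset.sum_comm]
        simp only [mul_apply, TensorProduct.sum_tmul]
    _ = 1 ⊗ₜ (z i j * t) := by
        simp [w, z, (isBBMatrix_ZMat E F).mul_twistedTranspose, one_apply, TensorProduct.ite_tmul]

end BB

/-- **Statement 9.** If `B(E,F) ≠ 0` then the right Galois map
`κᵣ = (m ⊗ id) ∘ (id ⊗ β) : B(E,F) ⊗ B(E,F) → B(E,F) ⊗ B(F)` is bijective, where
`β` is the unique algebra homomorphism with `β(z i j) = ∑ l, z i l ⊗ b l j`. -/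
theorem BB_right_galois_bijective {m n : ℕ}
    (E : Matrix (Fin m) (Fin m) k) (F : Matrix (Fin n) (Fin n) k)
    (hE : IsUnit E.det) (hF : IsUnit F.det)
    (hnz : (1 : BB k E F) ≠ 0)
    (β : BB k E F →ₐ[k] (BB k E F ⊗[k] BB k F F))
    (hβ : ∀ i j, β (ZMat k E F i j) = ∑ l, ZMat k E F i l ⊗ₜ[k] ZMat k F F l j) :
    Function.Bijective
      ((LinearMap.rTensor (BB k F F) (LinearMap.mul' k (BB k E F))) ∘ₗ
        (TensorProduct.assoc k (BB k E F) (BB k E F) (BB k F F)).symm.toLinearMap ∘ₗ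
        (LinearMap.lTensor (BB k E F) β.toLinearMap) :
        (BB k E F ⊗[k] BB k E F) →ₗ[k] (BB k E F ⊗[k] BB k F F)) := by
  change Function.Bijective (galoisMap β)
  constructor
  · refine galoisMap_injective_of_translation β (BB.translation hE hF) (BB.adjoin_range_ZMat E F) ?_
    rintro _ ⟨⟨i, j⟩, rfl⟩
    exact BB.translationAction_coaction_ZMat hE hF hβ i j
  · refine galoisMap_surjective_of_adjoin_eq_top β (BB.adjoin_range_ZMat F F) ?_
    rintro _ ⟨⟨i, j⟩, rfl⟩
    exact BB.one_tmul_ZMat_mem_range_galoisMap hβ i j
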